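/- Assume that for every choice of 50 pairwise distinct positive integers b₁, …, b₅₀ there exist indices i ≠ j such that there are infinitely many positive integers r with bᵢr − 1 and bⱼr − 1 both prime. Assume also that there exist 50 pairwise distinct positive integers a₁, …, a₅₀ with aᵢ·σ(aⱼ) = aⱼ·σ(aᵢ) for all i, j. Then the set of positive integers k for which the equation σ(n) = σ(n+k) has infinitely many solutions n has positive lower asymptotic density. -/

import Mathlib

/-- The sum-of-divisors function `σ`. -/
def sigma (n : ℕ) : ℕ := ∑ d ∈ n.divisors, d

/-!
Let `a` and `b` be friends, that is, `σ(a)/a = σ(b)/b`. If `p` and `q` are large primes with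
`a(p + 1) = b(q + 1)`, then `n = ap` satisfies `n + (a - b) = bq` and
`σ(ap) = σ(a)(p + 1) = σ(b)(q + 1) = σ(bq)`, so infinitely many such pairs put `a - b` among the
shifts `k`. Multiplying `a` and `b` by any `m` coprime to both keeps them friends and does not
change the pairs `(p, q)`; letting `m` run through `1 + abt` yields a whole arithmetic progression
of shifts.

The pairs come from the prime tuples hypothesis for the forms `bᵢr - 1` with `bᵢ = L/aᵢ`, where `L`
is a common multiple of the friends `aᵢ`: from `p = bᵢr - 1` and `q = bⱼr - 1` one gets
`aᵢ(p + 1) = Lr = aⱼ(q + 1)`.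
-/

/-- A set of natural numbers with positive lower asymptotic density: for some `c > 0`, it has at
least `c * N` elements in `[1, N]` for all large `N`. -/
def HasPosLowerDensity (S : Set ℕ) : Prop :=
  ∃ c : ℝ, 0 < c ∧ ∀ᶠ N : ℕ in Filter.atTop,
    c * N ≤ ({k : ℕ | 0 < k ∧ k ≤ N ∧ k ∈ S}.ncard : ℝ)

/-- The set of `k` for which `σ(n) = σ(n + k)` has infinitely many positive solutions `n`. -/
def sigmaShifts : Set ℕ :=
  {k | {n : ℕ | 0 < n ∧ sigma n = sigma (n + k)}.Infinite}

/-- Two positive integers are friends if `σ(a)/a = σ(b)/b`; the denominators are cleared to stay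
in `ℕ`. -/
def Friends (a b : ℕ) : Prop :=
  a * sigma b = b * sigma a

/-- The primes `p` that have a partner prime `q` with `a(p + 1) = b(q + 1)`. For friends `a` and
`b` this makes `σ(ap) = σ(bq)`, apart from finitely many `p`. -/
def linkedPrimes (a b : ℕ) : Set ℕ :=
  {p | p.Prime ∧ ∃ q : ℕ, q.Prime ∧ a * (p + 1) = b * (q + 1)}

theorem HasPosLowerDensity.mono {S T : Set ℕ} (hS : HasPosLowerDensity S) (hST : S ⊆ T) :
    HasPosLowerDensity T := by
  obtain ⟨c, hc, hcount⟩ := hS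
  refine ⟨c, hc, hcount.mono fun N hN => hN.trans (Nat.cast_le.2 (Set.ncard_le_ncard ?_ ?_))⟩
  · exact fun k ⟨hk0, hkN, hkS⟩ => ⟨hk0, hkN, hST hkS⟩
  · exact (Set.finite_Iic N).subset fun k hk => hk.2.1

theorem div_le_ncard_range_add_mul (d N : ℕ) {e : ℕ} (he : 0 < e) :
    (N - d) / e ≤ {k : ℕ | 0 < k ∧ k ≤ N ∧ k ∈ Set.range fun t => d + e * t}.ncard := by
  set f : ℕ → ℕ := fun t => d + e * t
  have hf : f.Injective := fun s t hst => Nat.eq_of_mul_eq_mul_left he (Nat.add_left_cancel hst)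
  have himage : f '' Set.Ioc 0 ((N - d) / e) ⊆ {k | 0 < k ∧ k ≤ N ∧ k ∈ Set.range f} := by
    rintro _ ⟨t, ⟨ht0, ht⟩, rfl⟩
    have hpos : 0 < e * t := Nat.mul_pos he ht0
    have hle : e * t ≤ N - d := (Nat.mul_le_mul_left e ht).trans (Nat.mul_div_le _ _)
    exact ⟨by simp only [f]; omega, by simp only [f]; omega, t, rfl⟩
  calc (N - d) / e = (f '' Set.Ioc 0 ((N - d) / e)).ncard := by
        rw [Set.ncard_image_of_injective _ hf, ← Finset.coe_Ioc, Set.ncard_coe_finset,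
          Nat.card_Ioc, Nat.sub_zero]
    _ ≤ _ := Set.ncard_le_ncard himage ((Set.finite_Iic N).subset fun k hk => hk.2.1)

theorem hasPosLowerDensity_range_add_mul (d : ℕ) {e : ℕ} (he : 0 < e) :
    HasPosLowerDensity (Set.range fun t => d + e * t) := by
  refine ⟨1 / (2 * e), by positivity, ?_⟩
  filter_upwards [Filter.eventually_ge_atTop (2 * (d + e))] with N hN
  have hhalf : N ≤ 2 * e * ((N - d) / e) := by
    have hfloor : N - d < e * ((N - d) / e) + e := Nat.lt_mul_div_succ _ he
    rw [mul_assoc]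
    omega
  have hcount := hhalf.trans (Nat.mul_le_mul_left (2 * e) (div_le_ncard_range_add_mul d N he))
  rw [one_div_mul_eq_div, div_le_iff₀' (by positivity)]
  exact_mod_cast hcount

theorem sigma_mul_of_coprime {a b : ℕ} (hab : a.Coprime b) :
    sigma (a * b) = sigma a * sigma b :=
  hab.sum_divisors_mul

theorem sigma_prime {p : ℕ} (hp : p.Prime) : sigma p = p + 1 :=
  hp.sum_divisors

namespace Friends

variable {a b : ℕ}

theorem sigma_mul_eq_sigma_mul {x y : ℕ} (hab : Friends a b) (ha : 0 < a) (hb : 0 < b)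
    (hxy : a * x = b * y) : sigma a * x = sigma b * y := by
  refine Nat.eq_of_mul_eq_mul_left (Nat.mul_pos ha hb) ?_
  calc a * b * (sigma a * x) = b * sigma a * (a * x) := by ring
    _ = a * sigma b * (b * y) := by rw [hxy, ← hab]
    _ = a * b * (sigma b * y) := by ring

theorem mul_left {m : ℕ} (hab : Friends a b) (hma : m.Coprime a) (hmb : m.Coprime b) :
    Friends (m * a) (m * b) := by
  unfold Friends at hab ⊢
  rw [sigma_mul_of_coprime hma, sigma_mul_of_coprime hmb]
  linear_combination m * sigma m * hab

theorem sigma_mul_prime_eq {p q : ℕ} (hab : Friends a b) (ha : 0 < a) (hb : 0 < b)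
    (hp : p.Prime) (hq : q.Prime) (hap : a.Coprime p) (hbq : b.Coprime q)
    (hpq : a * (p + 1) = b * (q + 1)) : sigma (a * p) = sigma (b * q) := by
  rw [sigma_mul_of_coprime hap, sigma_mul_of_coprime hbq, sigma_prime hp, sigma_prime hq]
  exact hab.sigma_mul_eq_sigma_mul ha hb hpq

theorem sub_mem_sigmaShifts (hab : Friends a b) (hb : 0 < b) (hba : b ≤ a)
    (hinf : (linkedPrimes a b).Infinite) : a - b ∈ sigmaShifts := by
  have ha : 0 < a := hb.trans_le hba
  have hlarge : (linkedPrimes a b \ Set.Iic a).Infinite := hinf.sdiff (Set.finite_Iic a)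
  refine (hlarge.image (f := (a * ·)) (mul_right_injective₀ ha.ne').injOn).mono ?_
  rintro _ ⟨p, ⟨⟨hp, q, hq, hpq⟩, hpa⟩, rfl⟩
  have hap : a < p := not_le.1 hpa
  have hle : p + 1 ≤ q + 1 :=
    Nat.le_of_mul_le_mul_left (hpq.trans_le (Nat.mul_le_mul_right _ hba)) ha
  have hbq : b < q := hba.trans_lt (hap.trans_le (Nat.le_of_succ_le_succ hle))
  have hshift : a * p + (a - b) = b * q := by
    rw [mul_add_one, mul_add_one] at hpq
    omega
  refine ⟨Nat.mul_pos ha hp.pos, ?_⟩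
  rw [hshift]
  exact hab.sigma_mul_prime_eq ha hb hp hq (Nat.coprime_of_lt_prime ha.ne' hap hp).symm
    (Nat.coprime_of_lt_prime hb.ne' hbq hq).symm hpq

end Friends

section LinkedPrimes

variable {a b : ℕ}

theorem linkedPrimes_subset_mul_left (m : ℕ) :
    linkedPrimes a b ⊆ linkedPrimes (m * a) (m * b) := by
  rintro p ⟨hp, q, hq, hpq⟩
  exact ⟨hp, q, hq, by rw [mul_assoc, hpq, mul_assoc]⟩

theorem infinite_linkedPrimes {u v : ℕ} (huv : a * u = b * v)
    (hinf : {r : ℕ | (u * r - 1).Prime ∧ (v * r - 1).Prime}.Infinite) :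
    (linkedPrimes a b).Infinite := by
  have hsucc {w r : ℕ} (hw : (w * r - 1).Prime) : w * r - 1 + 1 = w * r := by
    have := hw.pos
    omega
  have hinj : Set.InjOn (fun r => u * r - 1)
      {r : ℕ | (u * r - 1).Prime ∧ (v * r - 1).Prime} := by
    rintro r ⟨hr, -⟩ s ⟨hs, -⟩ hrs
    have hmul : u * r = u * s := by rw [← hsucc hr, ← hsucc hs]; exact congrArg (· + 1) hrs
    refine Nat.eq_of_mul_eq_mul_left (Nat.pos_of_ne_zero ?_) hmul
    rintro rfl
    simp [Nat.not_prime_zero] at hr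
  refine (hinf.image hinj).mono ?_
  rintro _ ⟨r, ⟨hp, hq⟩, rfl⟩
  refine ⟨hp, v * r - 1, hq, ?_⟩
  rw [hsucc hp, hsucc hq, ← mul_assoc, huv, mul_assoc]

end LinkedPrimes

theorem Friends.hasPosLowerDensity_sigmaShifts {a b : ℕ} (hab : Friends a b) (hb : 0 < b)
    (hba : b < a) (hinf : (linkedPrimes a b).Infinite) : HasPosLowerDensity sigmaShifts := by
  have hstep : 0 < a * b * (a - b) :=
    Nat.mul_pos (Nat.mul_pos (hb.trans hba) hb) (Nat.sub_pos_of_lt hba)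
  refine (hasPosLowerDensity_range_add_mul (a - b) hstep).mono (Set.range_subset_iff.2 fun t => ?_)
  have hma : (1 + a * b * t).Coprime a := by simp [mul_assoc]
  have hmb : (1 + a * b * t).Coprime b := by simp [mul_assoc, mul_left_comm a b]
  have hshift : (1 + a * b * t) * a - (1 + a * b * t) * b = a - b + a * b * (a - b) * t := by
    rw [← Nat.mul_sub]
    ring
  rw [← hshift]
  exact (hab.mul_left hma hmb).sub_mem_sigmaShifts (by positivity)
    (Nat.mul_le_mul_left _ hba.le) (hinf.mono (linkedPrimes_subset_mul_left _))

theorem exists_injective_mul_eq_mul {ι : Type*} [Finite ι] {a : ι → ℕ} (ha : ∀ i, 0 < a i)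
    (hinj : a.Injective) :
    ∃ b : ι → ℕ, (∀ i, 0 < b i) ∧ b.Injective ∧ ∀ i j, a i * b i = a j * b j := by
  cases nonempty_fintype ι
  have hprod : 0 < ∏ i, a i := Finset.prod_pos fun i _ => ha i
  choose b hb using fun i => Finset.dvd_prod_of_mem a (Finset.mem_univ i)
  have hbpos (i : ι) : 0 < b i := Nat.pos_of_mul_pos_left (hb i ▸ hprod)
  have hmul (i j : ι) : a i * b i = a j * b j := (hb i).symm.trans (hb j)
  refine ⟨b, hbpos, fun i j hij => hinj ?_, hmul⟩
  exact Nat.eq_of_mul_eq_mul_right (hbpos j) (hij ▸ hmul i j)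

theorem stmt_19_general {ι : Type*} [Finite ι]
    (hDHL : ∀ b : ι → ℕ, (∀ i, 0 < b i) → Function.Injective b →
      ∃ i j : ι, i ≠ j ∧
        {r : ℕ | 0 < r ∧ (b i * r - 1).Prime ∧ (b j * r - 1).Prime}.Infinite)
    (hfriends : ∃ a : ι → ℕ, (∀ i, 0 < a i) ∧ Function.Injective a ∧
      ∀ i j, Friends (a i) (a j)) :
    HasPosLowerDensity sigmaShifts := by
  obtain ⟨a, ha, hainj, hfriend⟩ := hfriends
  obtain ⟨b, hb, hbinj, hmul⟩ := exists_injective_mul_eq_mul ha hainj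
  obtain ⟨i, j, hij, hinf⟩ := hDHL b hb hbinj
  wlog hlt : a j < a i generalizing i j
  · refine this j i hij.symm (by simpa only [and_comm] using hinf) ?_
    exact (not_lt.1 hlt).lt_of_ne (hainj.ne hij)
  have hlinked : (linkedPrimes (a i) (a j)).Infinite :=
    infinite_linkedPrimes (hmul i j) (hinf.mono fun _ hr => hr.2)
  exact (hfriend i j).hasPosLowerDensity_sigmaShifts (ha j) hlt hlinked

/-- Assuming the consequence of `DHL*(50;2)` for the forms `bᵢr - 1`, and the
existence of 50 pairwise distinct positive integers with equal ratios
`σ(aᵢ)/aᵢ` (a circle of 50 friends), the set of `k` for which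
`σ(n) = σ(n+k)` has infinitely many solutions has positive lower density. -/
theorem stmt_19
    (hDHL : ∀ b : Fin 50 → ℕ, (∀ i, 0 < b i) → Function.Injective b →
      ∃ i j : Fin 50, i ≠ j ∧
        {r : ℕ | 0 < r ∧ (b i * r - 1).Prime ∧ (b j * r - 1).Prime}.Infinite)
    (hfriends : ∃ a : Fin 50 → ℕ, (∀ i, 0 < a i) ∧ Function.Injective a ∧
      ∀ i j, a i * sigma (a j) = a j * sigma (a i)) :
    ∃ c : ℝ, 0 < c ∧ ∀ᶠ N : ℕ in Filter.atTop,
      c * N ≤ ({k : ℕ | 0 < k ∧ k ≤ N ∧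
        {n : ℕ | 0 < n ∧ sigma n = sigma (n + k)}.Infinite}.ncard : ℝ) :=
  stmt_19_general hDHL hfriends
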